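/- Let (H, x, Y) be an sl2-triple in a finite-dimensional Lie algebra g over a field k of characteristic zero. Let 𝔳 be the supremum of the subspaces g_i over all integers i ≥ 2, and let ⁅𝔳, 𝔳⁆ be the k-span of all brackets of pairs of elements of 𝔳. Then the k-linear map g_2 × g_3 → 𝔳/⁅𝔳, 𝔳⁆ sending (a, b) to the class of a + b is a linear isomorphism. -/

import Mathlib

/-- The `i`-eigenspace of `ad H` on a Lie algebra `g`:
`g_i = {z ∈ g | ⁅H, z⁆ = (i : k) • z}`. -/
def gwt (k : Type*) [Field k] {g : Type*} [LieRing g] [LieAlgebra k g]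
    (H : g) (i : ℤ) : Submodule k g where
  carrier := {z | ⁅H, z⁆ = (i : k) • z}
  add_mem' := by
    intro a b ha hb
    simp only [Set.mem_setOf_eq] at *
    rw [lie_add, ha, hb, smul_add]
  zero_mem' := by simp
  smul_mem' := by
    intro c a ha
    simp only [Set.mem_setOf_eq] at *
    rw [lie_smul, ha]
    exact smul_comm c ((i : k)) a

/-- The sum `⨆ {i ≥ n} g_i` of the eigenspaces of `ad H` with eigenvalue at least `n`. -/
def vsp (k : Type*) [Field k] {g : Type*} [LieRing g] [LieAlgebra k g]
    (H : g) (n : ℤ) : Submodule k g :=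
  ⨆ i : ℤ, ⨆ _ : n ≤ i, gwt k H i

/-- The commutator subspace `⁅V, V⁆`: the `k`-span of all brackets of pairs of
elements of `V`. -/
def brkt (k : Type*) [Field k] {g : Type*} [LieRing g] [LieAlgebra k g]
    (V : Submodule k g) : Submodule k g :=
  Submodule.span k {w : g | ∃ a ∈ V, ∃ b ∈ V, w = ⁅a, b⁆}

lemma gwt_le_vsp (k : Type*) [Field k] {g : Type*} [LieRing g] [LieAlgebra k g]
    (H : g) {n i : ℤ} (h : n ≤ i) : gwt k H i ≤ vsp k H n :=
  le_iSup_of_le i (le_iSup_of_le h le_rfl)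

/-- The map `g_2 × g_3 → 𝔳 ⧸ ⁅𝔳, 𝔳⁆`, `(a, b) ↦ [a + b]`, where
`𝔳 = ⨆ {i ≥ 2} g_i`. -/
def addClassMap (k : Type*) [Field k] {g : Type*} [LieRing g] [LieAlgebra k g]
    (H : g) :
    gwt k H 2 × gwt k H 3 →
      (vsp k H 2 ⧸ (brkt k (vsp k H 2)).comap (vsp k H 2).subtype) :=
  fun p => Submodule.Quotient.mk
    (Submodule.inclusion (gwt_le_vsp k H (le_refl (2 : ℤ))) p.1 +
      Submodule.inclusion (gwt_le_vsp k H (by norm_num : (2 : ℤ) ≤ 3)) p.2)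


lemma mem_gwt_iff {k : Type*} [Field k] {g : Type*} [LieRing g] [LieAlgebra k g]
    {H : g} {i : ℤ} {z : g} : z ∈ gwt k H i ↔ ⁅H, z⁆ = (i : k) • z := Iff.rfl

lemma gwt_lie {k : Type*} [Field k] {g : Type*} [LieRing g] [LieAlgebra k g]
    {H : g} {i j : ℤ} {a b : g} (ha : a ∈ gwt k H i) (hb : b ∈ gwt k H j) :
    ⁅a, b⁆ ∈ gwt k H (i + j) := by
  rw [mem_gwt_iff] at *
  rw [leibniz_lie, ha, hb, smul_lie, lie_smul, ← add_smul]
  push_cast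
  rfl

lemma gwt_indep (k : Type*) [Field k] [CharZero k] {g : Type*} [LieRing g] [LieAlgebra k g]
    (H : g) : iSupIndep (gwt k H) := by
  have h := (Module.End.eigenspaces_iSupIndep (LieAlgebra.ad k g H)).comp
    (Int.cast_injective (α := k))
  convert h using 1
  ext i z
  simp [mem_gwt_iff, Module.End.mem_eigenspace_iff]

lemma pow_mem_gwt {k : Type*} [Field k] {g : Type*} [LieRing g] [LieAlgebra k g]
    {H x z : g} (hx : x ∈ gwt k H 2) {j : ℤ} (hz : z ∈ gwt k H j) (n : ℕ) :
    ((LieAlgebra.ad k g x) ^ n) z ∈ gwt k H (j + 2 * n) := by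
  induction n with
  | zero => simpa using hz
  | succ n ih =>
    rw [pow_succ', Module.End.mul_apply, LieAlgebra.ad_apply]
    have := gwt_lie hx ih
    convert this using 2
    push_cast
    ring

lemma exists_pow_zero {k : Type*} [Field k] [CharZero k] {g : Type*} [LieRing g] [LieAlgebra k g]
    [FiniteDimensional k g]
    {H x z : g} (hx : x ∈ gwt k H 2) {j : ℤ} (hz : z ∈ gwt k H j) :
    ∃ n : ℕ, ((LieAlgebra.ad k g x) ^ n) z = 0 := by
  by_contra! hc
  have hfin := Module.End.finite_hasEigenvalue (LieAlgebra.ad k g H)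
  have hinj : Function.Injective (fun n : ℕ => ((j + 2 * n : ℤ) : k)) := by
    intro a b hab
    have := Int.cast_injective (α := k) hab
    omega
  refine Set.infinite_range_of_injective hinj (hfin.subset ?_)
  rintro _ ⟨n, rfl⟩
  refine Module.End.hasEigenvalue_of_hasEigenvector (x := ((LieAlgebra.ad k g x) ^ n) z)
    ⟨?_, hc n⟩
  rw [Module.End.mem_eigenspace_iff, LieAlgebra.ad_apply]
  exact pow_mem_gwt hx hz n

lemma pow_lie_Y {k : Type*} [Field k] {g : Type*} [LieRing g] [LieAlgebra k g]
    {H x Y z : g} (hx : x ∈ gwt k H 2) (hxY : ⁅x, Y⁆ = H)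
    {j : ℤ} (hz : z ∈ gwt k H j) (n : ℕ) :
    ((LieAlgebra.ad k g x) ^ (n + 1)) ⁅Y, z⁆ =
      ⁅Y, ((LieAlgebra.ad k g x) ^ (n + 1)) z⁆ +
        (((n + 1) * (j + n) : ℤ) : k) • ((LieAlgebra.ad k g x) ^ n) z := by
  induction n with
  | zero =>
    have hz' := mem_gwt_iff.1 hz
    simp [leibniz_lie x Y z, hxY, hz', add_comm]
  | succ n ih =>
    have h1 := mem_gwt_iff.1 (pow_mem_gwt hx hz (n + 1))
    rw [pow_succ', Module.End.mul_apply, ih, map_add, map_smul, ← Module.End.mul_apply _ (_ ^ n),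
      ← pow_succ', LieAlgebra.ad_apply, leibniz_lie x Y, hxY, h1,
      Module.End.mul_apply, LieAlgebra.ad_apply,
      add_comm (_ • _) ⁅Y, _⁆, add_assoc, ← add_smul]
    congr 2
    push_cast
    ring

lemma exists_lie_eq {k : Type*} [Field k] [CharZero k] {g : Type*} [LieRing g] [LieAlgebra k g]
    {H x Y : g} (hx : x ∈ gwt k H 2) (hY : Y ∈ gwt k H (-2)) (hxY : ⁅x, Y⁆ = H)
    {j : ℤ} (hj : 1 ≤ j) (n : ℕ) : ∀ z ∈ gwt k H j, ((LieAlgebra.ad k g x) ^ n) z = 0 →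
    ∃ w ∈ gwt k H (j - 2), z = ⁅x, w⁆ := by
  induction n with
  | zero =>
    intro z _ h
    exact ⟨0, zero_mem _, by simpa using h⟩
  | succ n ih =>
    intro z hz h
    set c : k := (((n + 1) * (j + n) : ℤ) : k) with hc
    have hc0 : c ≠ 0 := by
      rw [hc, Int.cast_ne_zero]
      have h1 : (0 : ℤ) < n + 1 := by omega
      have h2 : (0 : ℤ) < j + n := by omega
      positivity
    have hYz : ⁅Y, z⁆ ∈ gwt k H (j - 2) := by
      have := gwt_lie hY hz
      rwa [show -2 + j = j - 2 by ring] at this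
    have hxYz : ⁅x, ⁅Y, z⁆⁆ ∈ gwt k H j := by
      have := gwt_lie hx hYz
      rwa [show 2 + (j - 2) = j by ring] at this
    obtain ⟨w, hw, hw'⟩ := ih (⁅x, ⁅Y, z⁆⁆ - c • z)
      (sub_mem hxYz (Submodule.smul_mem _ _ hz)) (by
        have := pow_lie_Y hx hxY hz n
        rw [h, lie_zero, zero_add, pow_succ, Module.End.mul_apply, LieAlgebra.ad_apply] at this
        rw [map_sub, map_smul, this, sub_self])
    refine ⟨c⁻¹ • (⁅Y, z⁆ - w), Submodule.smul_mem _ _ (sub_mem hYz hw), ?_⟩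
    rw [lie_smul, lie_sub, ← hw', sub_sub_cancel, inv_smul_smul₀ hc0]

lemma brkt_le (k : Type*) [Field k] {g : Type*} [LieRing g] [LieAlgebra k g]
    (H : g) : brkt k (vsp k H 2) ≤ vsp k H 4 := by
  refine Submodule.span_le.2 ?_
  rintro _ ⟨a, ha, b, hb, rfl⟩
  have key : ∀ i : ℤ, 2 ≤ i → ∀ a ∈ gwt k H i, ∀ b ∈ vsp k H 2, ⁅a, b⁆ ∈ vsp k H 4 := by
    intro i hi a ha b hb
    have : vsp k H 2 ≤ (vsp k H 4).comap (LieAlgebra.ad k g a) :=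
      iSup_le fun j => iSup_le fun hj c hc =>
        gwt_le_vsp k H (by omega : 4 ≤ i + j) (gwt_lie ha hc)
    exact this hb
  have : vsp k H 2 ≤ (vsp k H 4).comap (LieAlgebra.ad k g b) :=
    iSup_le fun j => iSup_le fun hj c hc => by
      rw [Submodule.mem_comap, LieAlgebra.ad_apply, ← lie_skew]
      exact neg_mem (key j hj c hc b hb)
  have h := this ha
  rw [Submodule.mem_comap, LieAlgebra.ad_apply] at h
  rw [SetLike.mem_coe, ← lie_skew]
  exact neg_mem h

lemma vsp_le {k : Type*} [Field k] [CharZero k] {g : Type*} [LieRing g] [LieAlgebra k g]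
    [FiniteDimensional k g]
    {H x Y : g} (hx : x ∈ gwt k H 2) (hY : Y ∈ gwt k H (-2)) (hxY : ⁅x, Y⁆ = H) :
    vsp k H 2 ≤ (gwt k H 2 ⊔ gwt k H 3) ⊔ brkt k (vsp k H 2) := by
  refine iSup_le fun i => iSup_le fun hi => ?_
  rcases (by omega : i = 2 ∨ i = 3 ∨ 4 ≤ i) with rfl | rfl | h4
  · exact le_sup_left.trans le_sup_left
  · exact le_sup_right.trans le_sup_left
  · refine le_trans ?_ le_sup_right
    intro z hz
    obtain ⟨n, hn⟩ := exists_pow_zero hx hz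
    obtain ⟨w, hw, rfl⟩ := exists_lie_eq hx hY hxY (by omega) n z hz hn
    exact Submodule.subset_span ⟨x, gwt_le_vsp k H le_rfl hx, w,
      gwt_le_vsp k H (by omega) hw, rfl⟩

/-- The `k`-linear map `g_2 × g_3 → 𝔳 ⧸ ⁅𝔳, 𝔳⁆`, `(a, b) ↦ [a + b]`, is a
linear isomorphism. -/
theorem stmt7 {k : Type*} [Field k] [CharZero k]
    {g : Type*} [LieRing g] [LieAlgebra k g] [FiniteDimensional k g]
    (H x Y : g) (hHx : ⁅H, x⁆ = (2 : k) • x) (hHY : ⁅H, Y⁆ = (-2 : k) • Y)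
    (hxY : ⁅x, Y⁆ = H) :
    IsLinearMap k (addClassMap k H) ∧ Function.Bijective (addClassMap k H) := by
  have hx : x ∈ gwt k H 2 := by rw [mem_gwt_iff, hHx]; norm_num
  have hY : Y ∈ gwt k H (-2) := by rw [mem_gwt_iff, hHY]; norm_num
  have hlin : IsLinearMap k (addClassMap k H) := by
    constructor
    · intro p q
      simp only [addClassMap, Prod.fst_add, Prod.snd_add, map_add, ← Submodule.Quotient.mk_add]
      congr 1
      abel
    · intro c p
      simp only [addClassMap, Prod.smul_fst, Prod.smul_snd, map_smul,
        ← Submodule.Quotient.mk_smul, smul_add]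
  refine ⟨hlin, ?_, ?_⟩
  · refine (injective_iff_map_eq_zero (hlin.mk' _)).2 ?_
    rintro ⟨⟨a, ha⟩, ⟨b, hb⟩⟩ h
    have h1 : a + b ∈ brkt k (vsp k H 2) :=
      (Submodule.Quotient.mk_eq_zero ((brkt k (vsp k H 2)).comap (vsp k H 2).subtype)).1 h
    have h4 := brkt_le k H h1
    have hind := gwt_indep k H
    have hle : ∀ i : ℤ, i < 4 → vsp k H 4 ≤ ⨆ j, ⨆ _ : j ≠ i, gwt k H j := fun i hi =>
      iSup_le fun j => iSup_le fun hj => le_iSup₂_of_le j (by omega) le_rfl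
    have ha0 : a = 0 := by
      refine Submodule.disjoint_def.1 (hind 2) a ha ?_
      have h3 : b ∈ ⨆ j, ⨆ _ : j ≠ (2 : ℤ), gwt k H j :=
        (le_iSup₂_of_le (f := fun j (_ : j ≠ (2 : ℤ)) => gwt k H j) 3 (by norm_num) le_rfl) hb
      simpa using sub_mem (hle 2 (by norm_num) h4) h3
    subst ha0
    have hb0 : b = 0 := by
      refine Submodule.disjoint_def.1 (hind 3) b hb ?_
      simpa using hle 3 (by norm_num) h4
    subst hb0
    rfl
  · intro q
    obtain ⟨⟨v, hv⟩, rfl⟩ := Submodule.Quotient.mk_surjective _ q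
    obtain ⟨s, hs, c, hc, hsc⟩ := Submodule.mem_sup.1 (vsp_le hx hY hxY hv)
    obtain ⟨a, ha, b, hb, rfl⟩ := Submodule.mem_sup.1 hs
    refine ⟨(⟨a, ha⟩, ⟨b, hb⟩), ?_⟩
    refine (Submodule.Quotient.eq _).2 ?_
    change a + b - v ∈ brkt k (vsp k H 2)
    rw [← hsc, sub_add_cancel_left]
    exact neg_mem hc
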